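/- Let m ≥ 2 and p ≥ 2 be integers, and let M_i = {i + r·p : 0 ≤ r ≤ m−1} for 0 ≤ i ≤ p−1. In the circulant graph C(m,p): (1) any two distinct vertices u, v lying in the same set M_i satisfy d(u,v) = 2; (2) for any two vertices u, v in the same set M_i and any vertex z outside M_i, d(u,z) = d(v,z). -/

import Mathlib

/-!
Reduction modulo `p` is a ring homomorphism `ℤ_{mp} → ℤ_p`. The sets `{k + r·p : r < m}` are
exactly its fibres (`exists_eq_iff_castHom`), so `M_i` is the fibre over `i`, and two vertices are
adjacent iff their residues modulo `p` differ by `±1` (`circC_adj_iff`). Hence vertices in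
the same `M_i` are false twins: they are nonadjacent, because `±1 ≠ 0` in `ℤ_p`, and have
the same neighbours. Two distinct twins `u`, `v` are at distance `2` through the common
neighbour `u + 1`, and the first edge of any walk from `u` to a third vertex can be replaced by an
edge from `v`, so both have the same distance to it (`edist_le_of_twins`).
-/

/-- A permutation of the vertices is a graph automorphism if it preserves adjacency. -/
def IsGraphAut {V : Type*} (G : SimpleGraph V) (σ : Equiv.Perm V) : Prop :=
  ∀ u v : V, G.Adj (σ u) (σ v) ↔ G.Adj u v

/-- A labeling with `r` labels is distinguishing if no nontrivial automorphism preserves it. -/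
def IsDistinguishing {V : Type*} (G : SimpleGraph V) {r : ℕ} (c : V → Fin r) : Prop :=
  ∀ σ : Equiv.Perm V, IsGraphAut G σ → (∀ v, c (σ v) = c v) → σ = Equiv.refl V

/-- The distinguishing number of a graph: the least `r` admitting an `r`-distinguishing
labeling. -/
noncomputable def distinguishingNumber {V : Type*} (G : SimpleGraph V) : ℕ :=
  sInf {r : ℕ | ∃ c : V → Fin r, IsDistinguishing G c}

/-- The jump set `A = {p-1+r·p, p+1+r·p : 0 ≤ r ≤ m-1}` inside `ℤ_{mp}`. -/
def jumpSet (m p : ℕ) : Set (ZMod (m * p)) :=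
  {a | ∃ r < m, a = ((p - 1 + r * p : ℕ) : ZMod (m * p)) ∨
                a = ((p + 1 + r * p : ℕ) : ZMod (m * p))}

/-- The circulant graph `C(m,p)` on vertex set `ℤ_{mp}`: `i` and `j` are adjacent iff
`j - i (mod mp)` lies in the jump set. -/
def circC (m p : ℕ) : SimpleGraph (ZMod (m * p)) :=
  SimpleGraph.circulantGraph (jumpSet m p)

/-- The set `M_i = {i + r·p : 0 ≤ r ≤ m-1}` in `ℤ_{mp}`. -/
def Mset (m p i : ℕ) : Set (ZMod (m * p)) :=
  {v | ∃ r < m, v = ((i + r * p : ℕ) : ZMod (m * p))}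

/-- The progression `k + r·p`, `r < m`, in `ℤ_{mp}` is the full fibre over `k` of reduction
modulo `p`. -/
theorem exists_eq_iff_castHom (m p : ℕ) (hm : 2 ≤ m) (hp : 2 ≤ p) (k : ℕ) (v : ZMod (m * p)) :
    (∃ r < m, v = ((k + r * p : ℕ) : ZMod (m * p))) ↔
      ZMod.castHom (Dvd.intro_left m rfl) (ZMod p) v = (k : ZMod p) := by
  have : NeZero (m * p) := ⟨by positivity⟩
  constructor
  · rintro ⟨r, _, rfl⟩
    rw [map_natCast]
    simp
  · intro h
    have hk : ZMod.castHom (Dvd.intro_left m rfl) (ZMod p)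
        (v - (k : ZMod (m * p))) = 0 := by
      rw [map_sub, h, map_natCast, sub_self]
    rw [← ZMod.natCast_zmod_val (v - (k : ZMod (m * p))), map_natCast, ZMod.natCast_eq_zero_iff] at hk
    obtain ⟨r, hr⟩ := hk
    refine ⟨r, ?_, ?_⟩
    · have hlt := ZMod.val_lt (v - (k : ZMod (m * p)))
      rw [hr, mul_comm] at hlt
      exact Nat.lt_of_mul_lt_mul_right hlt
    · have hv := ZMod.natCast_zmod_val (v - (k : ZMod (m * p)))
      rw [hr] at hv
      rw [Nat.cast_add, mul_comm r p, hv]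
      ring

theorem mem_jumpSet_iff (m p : ℕ) (hm : 2 ≤ m) (hp : 2 ≤ p) (a : ZMod (m * p)) :
    a ∈ jumpSet m p ↔ ZMod.castHom (Dvd.intro_left m rfl) (ZMod p) a = -1 ∨
      ZMod.castHom (Dvd.intro_left m rfl) (ZMod p) a = 1 := by
  have h1 := exists_eq_iff_castHom m p hm hp (p - 1) a
  have h2 := exists_eq_iff_castHom m p hm hp (p + 1) a
  rw [Nat.cast_sub (by omega)] at h1
  rw [Nat.cast_add] at h2
  simp only [CharP.cast_eq_zero, Nat.cast_one, zero_sub, zero_add] at h1 h2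
  rw [← h1, ← h2]
  simp only [jumpSet, Set.mem_ofPred_eq, and_or_left, exists_or]

theorem circC_adj_iff (m p : ℕ) (hm : 2 ≤ m) (hp : 2 ≤ p) (u v : ZMod (m * p)) :
    (circC m p).Adj u v ↔
      ZMod.castHom (Dvd.intro_left m rfl) (ZMod p) u -
          ZMod.castHom (Dvd.intro_left m rfl) (ZMod p) v = -1 ∨
      ZMod.castHom (Dvd.intro_left m rfl) (ZMod p) u -
          ZMod.castHom (Dvd.intro_left m rfl) (ZMod p) v = 1 := by
  have : Fact (1 < p) := ⟨hp⟩
  rw [circC, SimpleGraph.circulantGraph_adj, mem_jumpSet_iff m p hm hp,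
    mem_jumpSet_iff m p hm hp, map_sub, map_sub]
  constructor
  · grind
  · intro h
    refine ⟨?_, Or.inl h⟩
    rintro rfl
    simp at h

/-- Replacing the first edge of a walk from `u` to `z` by an edge from `v` keeps its length. -/
theorem edist_le_of_twins {V : Type*} (G : SimpleGraph V) {u v z : V}
    (h : ∀ w, G.Adj u w → G.Adj v w) (hz : u ≠ z) : G.edist v z ≤ G.edist u z := by
  refine le_iInf fun W => ?_
  cases W with
  | nil => exact absurd rfl hz
  | cons hadj W => exact SimpleGraph.edist_le (SimpleGraph.Walk.cons (h _ hadj) W)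

theorem stmt_16 (m p : ℕ) (hm : 2 ≤ m) (hp : 2 ≤ p) :
    (∀ i < p, ∀ u ∈ Mset m p i, ∀ v ∈ Mset m p i, u ≠ v → (circC m p).dist u v = 2) ∧
    (∀ i < p, ∀ u ∈ Mset m p i, ∀ v ∈ Mset m p i, ∀ z ∉ Mset m p i,
      (circC m p).dist u z = (circC m p).dist v z) := by
  have : Fact (1 < p) := ⟨hp⟩
  constructor
  · intro i _ u hu v hv huv
    have hu' := (exists_eq_iff_castHom m p hm hp i u).1 hu
    have hv' := (exists_eq_iff_castHom m p hm hp i v).1 hv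
    have hnadj : ¬ (circC m p).Adj u v := by
      rw [circC_adj_iff m p hm hp, hu', hv']
      simp
    have h1 : (circC m p).Adj u (u + 1) := by
      rw [circC_adj_iff m p hm hp, map_add, map_one]
      left; ring
    have h2 : (circC m p).Adj (u + 1) v := by
      rw [circC_adj_iff m p hm hp, map_add, map_one, hu', hv']
      right; ring
    let W : (circC m p).Walk u v := .cons h1 (.cons h2 .nil)
    have hle : (circC m p).dist u v ≤ 2 := SimpleGraph.dist_le W
    have h0 : (circC m p).dist u v ≠ 0 := by
      rw [Ne, W.reachable.dist_eq_zero_iff]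
      exact huv
    have hne1 : (circC m p).dist u v ≠ 1 := by
      rw [Ne, SimpleGraph.dist_eq_one_iff_adj]
      exact hnadj
    omega
  · intro i _ u hu v hv z hz
    have hu' := (exists_eq_iff_castHom m p hm hp i u).1 hu
    have hv' := (exists_eq_iff_castHom m p hm hp i v).1 hv
    have htwin : ∀ w, (circC m p).Adj u w ↔ (circC m p).Adj v w := by
      intro w
      rw [circC_adj_iff m p hm hp, circC_adj_iff m p hm hp, hu', hv']
    have huz : u ≠ z := fun h => hz (h ▸ hu)
    have hvz : v ≠ z := fun h => hz (h ▸ hv)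
    exact congrArg ENat.toNat <| le_antisymm
      (edist_le_of_twins _ (fun w => (htwin w).2) hvz)
      (edist_le_of_twins _ (fun w => (htwin w).1) huz)
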